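/- Let (C, Δ_C, R_C) and (M, Δ_M, R_M) be λ-weighted Rota-Baxter Lie coalgebras, and let h : M → C⊗C, ρ : M → M⊗C, φ : M → C be linear maps. Define Δ_{(h,ρ)} : C⊕M → (C⊕M)⊗(C⊕M) by Δ_{(h,ρ)}(c+m) = Δ_C(c) + h(m) + Δ_M(m) + ρ(m) − τρ(m) and R_φ : C⊕M → C⊕M by R_φ(c+m) = R_C(c) + R_M(m) + φ(m). Then (C⊕M, Δ_{(h,ρ)}, R_φ) is a λ-weighted Rota-Baxter Lie coalgebra if and only if (h, ρ, φ) is a non-abelian 2-cocycle on (C, Δ_C, R_C) with values in (M, Δ_M, R_M). -/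

import Mathlib

open TensorProduct LinearMap

section

variable {k : Type*} [Field k]
variable {C : Type*} [AddCommGroup C] [Module k C]
variable {M : Type*} [AddCommGroup M] [Module k M]
variable {E : Type*} [AddCommGroup E] [Module k E]

/-- Co-antisymmetry of a cobracket: `Δ = -τΔ`. -/
def CoAnti (Δ : C →ₗ[k] C ⊗[k] C) : Prop :=
  Δ = -((TensorProduct.comm k C C).toLinearMap ∘ₗ Δ)

/-- The co-Jacobi identity `(I⊗Δ)Δ - (Δ⊗I)Δ + (I⊗τ)(Δ⊗I)Δ = 0`. -/
def CoJacobi (Δ : C →ₗ[k] C ⊗[k] C) : Prop :=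
  lTensor C Δ ∘ₗ Δ
    - (TensorProduct.assoc k C C C).toLinearMap ∘ₗ rTensor C Δ ∘ₗ Δ
    + lTensor C (TensorProduct.comm k C C).toLinearMap ∘ₗ
        (TensorProduct.assoc k C C C).toLinearMap ∘ₗ rTensor C Δ ∘ₗ Δ = 0

/-- `(R⊗R)Δ = (I⊗R + R⊗I + λI) Δ R`. -/
def IsRBO (lam : k) (Δ : C →ₗ[k] C ⊗[k] C) (R : C →ₗ[k] C) : Prop :=
  TensorProduct.map R R ∘ₗ Δ
    = (lTensor C R + rTensor C R + lam • (LinearMap.id : C ⊗[k] C →ₗ[k] C ⊗[k] C)) ∘ₗ Δ ∘ₗ R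

/-- `λ`-weighted Rota-Baxter Lie coalgebra. -/
def IsRBLC (lam : k) (Δ : C →ₗ[k] C ⊗[k] C) (R : C →ₗ[k] C) : Prop :=
  CoAnti Δ ∧ CoJacobi Δ ∧ IsRBO lam Δ R

/-- Homomorphism of `λ`-weighted Rota-Baxter Lie coalgebras:
`(θ⊗θ)Δ_C = Δ_E θ` and `R_E θ = θ R_C`. -/
def IsHom (ΔC : C →ₗ[k] C ⊗[k] C) (RC : C →ₗ[k] C)
    (ΔE : E →ₗ[k] E ⊗[k] E) (RE : E →ₗ[k] E) (θ : C →ₗ[k] E) : Prop :=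
  TensorProduct.map θ θ ∘ₗ ΔC = ΔE ∘ₗ θ ∧ RE ∘ₗ θ = θ ∘ₗ RC

/-- Non-abelian 2-cocycle `(h, ρ, φ)` on `(C, Δ_C, R_C)` with values in `(M, Δ_M, R_M)`. -/
def NA2Cocycle (lam : k) (ΔC : C →ₗ[k] C ⊗[k] C) (RC : C →ₗ[k] C)
    (ΔM : M →ₗ[k] M ⊗[k] M) (RM : M →ₗ[k] M)
    (h : M →ₗ[k] C ⊗[k] C) (ρ : M →ₗ[k] M ⊗[k] C) (φ : M →ₗ[k] C) : Prop :=
  -- (1)  τh + h = 0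
  ((TensorProduct.comm k C C).toLinearMap ∘ₗ h + h = 0) ∧
  -- (2)  (I⊗Δ_C)h − (Δ_C⊗I)h + (I⊗τ)(Δ_C⊗I)h = (h⊗I)ρ + (I⊗h)τρ − (I⊗τ)(h⊗I)ρ
  (lTensor C ΔC ∘ₗ h
      - (TensorProduct.assoc k C C C).toLinearMap ∘ₗ rTensor C ΔC ∘ₗ h
      + lTensor C (TensorProduct.comm k C C).toLinearMap ∘ₗ
          (TensorProduct.assoc k C C C).toLinearMap ∘ₗ rTensor C ΔC ∘ₗ h
    = (TensorProduct.assoc k C C C).toLinearMap ∘ₗ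
        TensorProduct.map h (LinearMap.id : C →ₗ[k] C) ∘ₗ ρ
      + lTensor C h ∘ₗ (TensorProduct.comm k M C).toLinearMap ∘ₗ ρ
      - lTensor C (TensorProduct.comm k C C).toLinearMap ∘ₗ
          (TensorProduct.assoc k C C C).toLinearMap ∘ₗ
          TensorProduct.map h (LinearMap.id : C →ₗ[k] C) ∘ₗ ρ) ∧
  -- (3)  (I⊗Δ_C)ρ + (I⊗h)Δ_M = (ρ⊗I)ρ − (I⊗τ)(ρ⊗I)ρ
  (lTensor M ΔC ∘ₗ ρ + lTensor M h ∘ₗ ΔM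
    = (TensorProduct.assoc k M C C).toLinearMap ∘ₗ rTensor C ρ ∘ₗ ρ
      - lTensor M (TensorProduct.comm k C C).toLinearMap ∘ₗ
          (TensorProduct.assoc k M C C).toLinearMap ∘ₗ rTensor C ρ ∘ₗ ρ) ∧
  -- (4)  (Δ_M⊗I)ρ = (I⊗τ)(ρ⊗I)Δ_M + (I⊗ρ)Δ_M
  ((TensorProduct.assoc k M M C).toLinearMap ∘ₗ rTensor C ΔM ∘ₗ ρ
    = lTensor M (TensorProduct.comm k C M).toLinearMap ∘ₗ
        (TensorProduct.assoc k M C M).toLinearMap ∘ₗ rTensor M ρ ∘ₗ ΔM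
      + lTensor M ρ ∘ₗ ΔM) ∧
  -- (5)
  (TensorProduct.map φ RC ∘ₗ ρ
      - TensorProduct.map RC φ ∘ₗ (TensorProduct.comm k M C).toLinearMap ∘ₗ ρ
      - TensorProduct.map φ (LinearMap.id : C →ₗ[k] C) ∘ₗ ρ ∘ₗ RM
      + lTensor C φ ∘ₗ (TensorProduct.comm k M C).toLinearMap ∘ₗ ρ ∘ₗ RM
      + TensorProduct.map φ φ ∘ₗ ΔM
      - (lTensor C RC + rTensor C RC
          + lam • (LinearMap.id : C ⊗[k] C →ₗ[k] C ⊗[k] C)) ∘ₗ ΔC ∘ₗ φ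
    = (rTensor C RC + lTensor C RC
        + lam • (LinearMap.id : C ⊗[k] C →ₗ[k] C ⊗[k] C)) ∘ₗ h ∘ₗ RM
      - TensorProduct.map RC RC ∘ₗ h) ∧
  -- (6)  (R_M⊗φ)Δ_M + (R_M⊗R_C)ρ = (I⊗φ)Δ_M R_M + (I⊗R_C + R_M⊗I + λ)ρR_M
  (TensorProduct.map RM φ ∘ₗ ΔM + TensorProduct.map RM RC ∘ₗ ρ
    = lTensor M φ ∘ₗ ΔM ∘ₗ RM
      + (lTensor M RC + rTensor C RM
          + lam • (LinearMap.id : M ⊗[k] C →ₗ[k] M ⊗[k] C)) ∘ₗ ρ ∘ₗ RM)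

/-- The cobracket `Δ_{(h,ρ)}` on `C ⊕ M`. -/
noncomputable def prodCobra (ΔC : C →ₗ[k] C ⊗[k] C) (ΔM : M →ₗ[k] M ⊗[k] M)
    (h : M →ₗ[k] C ⊗[k] C) (ρ : M →ₗ[k] M ⊗[k] C) :
    (C × M) →ₗ[k] (C × M) ⊗[k] (C × M) :=
  TensorProduct.map (LinearMap.inl k C M) (LinearMap.inl k C M) ∘ₗ
      (ΔC ∘ₗ LinearMap.fst k C M + h ∘ₗ LinearMap.snd k C M)
    + TensorProduct.map (LinearMap.inr k C M) (LinearMap.inr k C M) ∘ₗ ΔM ∘ₗ LinearMap.snd k C M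
    + TensorProduct.map (LinearMap.inr k C M) (LinearMap.inl k C M) ∘ₗ ρ ∘ₗ LinearMap.snd k C M
    - TensorProduct.map (LinearMap.inl k C M) (LinearMap.inr k C M) ∘ₗ
        (TensorProduct.comm k M C).toLinearMap ∘ₗ ρ ∘ₗ LinearMap.snd k C M

/-- The operator `R_φ` on `C ⊕ M`. -/
def prodRB (RC : C →ₗ[k] C) (RM : M →ₗ[k] M) (φ : M →ₗ[k] C) :
    (C × M) →ₗ[k] (C × M) :=
  LinearMap.inl k C M ∘ₗ (RC ∘ₗ LinearMap.fst k C M + φ ∘ₗ LinearMap.snd k C M)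
    + LinearMap.inr k C M ∘ₗ RM ∘ₗ LinearMap.snd k C M

/-- `(α,β)` is extensible with respect to the non-abelian extension
`0 → C →f E →g M → 0`. -/
def Extensible (ΔE : E →ₗ[k] E ⊗[k] E) (RE : E →ₗ[k] E)
    (f : C →ₗ[k] E) (g : E →ₗ[k] M) (α : C →ₗ[k] C) (β : M →ₗ[k] M) : Prop :=
  ∃ γ : E →ₗ[k] E, IsHom ΔE RE ΔE RE γ ∧ Function.Bijective γ ∧
    Submodule.map γ (LinearMap.range f) = LinearMap.range f ∧
    γ ∘ₗ f = f ∘ₗ α ∧ g ∘ₗ γ = β ∘ₗ g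

/-- `(h', ρ', φ')` differs from `(h, ρ, φ)` by the equivalence move associated to
the linear map `s : M → C`. -/
def EquivVia (ΔC : C →ₗ[k] C ⊗[k] C) (RC : C →ₗ[k] C)
    (ΔM : M →ₗ[k] M ⊗[k] M) (RM : M →ₗ[k] M) (s : M →ₗ[k] C)
    (h : M →ₗ[k] C ⊗[k] C) (ρ : M →ₗ[k] M ⊗[k] C) (φ : M →ₗ[k] C)
    (h' : M →ₗ[k] C ⊗[k] C) (ρ' : M →ₗ[k] M ⊗[k] C) (φ' : M →ₗ[k] C) : Prop :=
  h' - h = TensorProduct.map s (LinearMap.id : C →ₗ[k] C) ∘ₗ ρ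
      - (TensorProduct.comm k C C).toLinearMap ∘ₗ
          TensorProduct.map s (LinearMap.id : C →ₗ[k] C) ∘ₗ ρ
      + TensorProduct.map s s ∘ₗ ΔM - ΔC ∘ₗ s ∧
  ρ' - ρ = lTensor M s ∘ₗ ΔM ∧
  φ' - φ = s ∘ₗ RM - RC ∘ₗ s

/-- Two non-abelian 2-cocycles are equivalent. -/
def CocEquiv (ΔC : C →ₗ[k] C ⊗[k] C) (RC : C →ₗ[k] C)
    (ΔM : M →ₗ[k] M ⊗[k] M) (RM : M →ₗ[k] M)
    (h : M →ₗ[k] C ⊗[k] C) (ρ : M →ₗ[k] M ⊗[k] C) (φ : M →ₗ[k] C)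
    (h' : M →ₗ[k] C ⊗[k] C) (ρ' : M →ₗ[k] M ⊗[k] C) (φ' : M →ₗ[k] C) : Prop :=
  ∃ s : M →ₗ[k] C, EquivVia ΔC RC ΔM RM s h ρ φ h' ρ' φ'

/-!
For a co-antisymmetric `Δ` on a module `L`, the co-Jacobi expression `J : L → L ⊗ L ⊗ L` changes
sign under every transposition of the tensor factors, and the Rota-Baxter expression
`B : L → L ⊗ L` changes sign under `τ`. When `L = C ⊕ M`, it is therefore enough to test `J` on
`C ⊗ C ⊗ C`, `M ⊗ C ⊗ C`, `M ⊗ M ⊗ C`, `M ⊗ M ⊗ M` and `B` on `C ⊗ C`, `M ⊗ C`, `M ⊗ M`.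
For `Δ_{(h,ρ)}` and `R_φ` the middle components express conditions (3), (4) and (6); the first ones
restrict to the identities of `C` on `C` and to conditions (2) and (5) on `M`; the last ones
are the identities of `M`. Condition (1) is the co-antisymmetry of `Δ_{(h,ρ)}` on `M` in `C ⊗ C`.
-/

section ProdTensor

variable {S A B A' B' P : Type*} [CommSemiring S] [AddCommMonoid P] [Module S P]
variable [AddCommMonoid A] [Module S A] [AddCommMonoid B] [Module S B]
variable [AddCommMonoid A'] [Module S A'] [AddCommMonoid B'] [Module S B']

theorem id_prod_eq_inl_comp_fst_add_inr_comp_snd :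
    (LinearMap.id : A × B →ₗ[S] A × B) = inl S A B ∘ₗ fst S A B + inr S A B ∘ₗ snd S A B := by
  ext <;> simp

theorem comp_snd_eq_zero_iff {g : B →ₗ[S] P} : g ∘ₗ snd S A B = 0 ↔ g = 0 := by
  simp [LinearMap.prod_ext_iff, comp_assoc]

theorem comp_fst_add_comp_snd_eq_zero_iff {f : A →ₗ[S] P} {g : B →ₗ[S] P} :
    f ∘ₗ fst S A B + g ∘ₗ snd S A B = 0 ↔ f = 0 ∧ g = 0 := by
  simp [LinearMap.prod_ext_iff, add_comp, comp_assoc]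

theorem prod_tensor_prod_hom_ext {f g : P →ₗ[S] (A × B) ⊗[S] (A' × B')}
    (h₁₁ : map (fst S A B) (fst S A' B') ∘ₗ f = map (fst S A B) (fst S A' B') ∘ₗ g)
    (h₁₂ : map (fst S A B) (snd S A' B') ∘ₗ f = map (fst S A B) (snd S A' B') ∘ₗ g)
    (h₂₁ : map (snd S A B) (fst S A' B') ∘ₗ f = map (snd S A B) (fst S A' B') ∘ₗ g)
    (h₂₂ : map (snd S A B) (snd S A' B') ∘ₗ f = map (snd S A B) (snd S A' B') ∘ₗ g) :
    f = g := by
  rw [← id_comp f, ← id_comp g, ← TensorProduct.map_id]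
  simp only [id_prod_eq_inl_comp_fst_add_inr_comp_snd, TensorProduct.map_add_left,
    TensorProduct.map_add_right, TensorProduct.map_comp, add_comp, comp_assoc, h₁₁, h₁₂, h₂₁, h₂₂]

end ProdTensor

section TripleTensor

variable {S W X Y Z X' Y' Z' : Type*} [CommSemiring S] [AddCommMonoid W] [Module S W]
variable [AddCommMonoid X] [Module S X] [AddCommMonoid Y] [Module S Y]
variable [AddCommMonoid Z] [Module S Z] [AddCommMonoid X'] [Module S X']
variable [AddCommMonoid Y'] [Module S Y'] [AddCommMonoid Z'] [Module S Z']

theorem map_map_comp_lTensor_comm (p : X →ₗ[S] X') (q : Y →ₗ[S] Y') (r : Z →ₗ[S] Z') :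
    map p (map q r) ∘ₗ lTensor X (TensorProduct.comm S Z Y).toLinearMap =
      lTensor X' (TensorProduct.comm S Z' Y').toLinearMap ∘ₗ map p (map r q) := by
  rw [map_comp_lTensor, lTensor_comp_map, map_comp_comm_eq]

theorem map_map_comp_leftComm (p : X →ₗ[S] X') (q : Y →ₗ[S] Y') (r : Z →ₗ[S] Z') :
    map p (map q r) ∘ₗ (TensorProduct.leftComm S Y X Z).toLinearMap =
      (TensorProduct.leftComm S Y' X' Z').toLinearMap ∘ₗ map q (map p r) := by
  ext; rfl

theorem leftComm_comp_lTensor (f : X →ₗ[S] Y ⊗[S] Z) :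
    (TensorProduct.leftComm S X' Y Z).toLinearMap ∘ₗ lTensor X' f =
      lTensor Y (TensorProduct.comm S Z X').toLinearMap ∘ₗ
        (TensorProduct.assoc S Y Z X').toLinearMap ∘ₗ rTensor X' f ∘ₗ
        (TensorProduct.comm S X' X).toLinearMap := by
  have tmul_eq (a : X') : (TensorProduct.leftComm S X' Y Z).toLinearMap ∘ₗ mk S X' (Y ⊗[S] Z) a =
      lTensor Y (TensorProduct.comm S Z X').toLinearMap ∘ₗ
        (TensorProduct.assoc S Y Z X').toLinearMap ∘ₗ (mk S (Y ⊗[S] Z) X').flip a := by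
    ext; rfl
  ext a b
  exact LinearMap.congr_fun (tmul_eq a) (f b)

theorem leftComm_comp_assoc :
    (TensorProduct.leftComm S X Y Z).toLinearMap ∘ₗ (TensorProduct.assoc S X Y Z).toLinearMap =
      (TensorProduct.assoc S Y X Z).toLinearMap ∘ₗ
        rTensor Z (TensorProduct.comm S X Y).toLinearMap := by
  ext; rfl

theorem leftComm_comp_lTensor_comm_comp_assoc_comp_rTensor (f : X →ₗ[S] Y ⊗[S] Z) :
    (TensorProduct.leftComm S Y X' Z).toLinearMap ∘ₗ
        lTensor Y (TensorProduct.comm S Z X').toLinearMap ∘ₗ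
        (TensorProduct.assoc S Y Z X').toLinearMap ∘ₗ rTensor X' f =
      lTensor X' f ∘ₗ (TensorProduct.comm S X X').toLinearMap := by
  have leftComm_leftComm : (TensorProduct.leftComm S Y X' Z).toLinearMap ∘ₗ
      (TensorProduct.leftComm S X' Y Z).toLinearMap = LinearMap.id := by
    ext; rfl
  calc
    _ = (TensorProduct.leftComm S Y X' Z).toLinearMap ∘ₗ
        ((TensorProduct.leftComm S X' Y Z).toLinearMap ∘ₗ lTensor X' f) ∘ₗ
          (TensorProduct.comm S X X').toLinearMap := by
      simp only [leftComm_comp_lTensor, comp_assoc, comm_comp_comm, comp_id]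
    _ = _ := by rw [comp_assoc, ← comp_assoc, leftComm_leftComm, id_comp]

theorem map_map_comp_assoc_comp_rTensor (f : W →ₗ[S] X ⊗[S] Y)
    (p : X →ₗ[S] X') (q : Y →ₗ[S] Y') (r : Z →ₗ[S] Z') :
    map p (map q r) ∘ₗ (TensorProduct.assoc S X Y Z).toLinearMap ∘ₗ rTensor Z f =
      (TensorProduct.assoc S X' Y' Z').toLinearMap ∘ₗ map (map p q ∘ₗ f) r := by
  rw [← comp_assoc, map_map_comp_assoc_eq, comp_assoc, map_comp_rTensor]

end TripleTensor

section Antisymmetric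

variable {S L P A B X Y Z : Type*} [CommRing S]
variable [AddCommGroup L] [Module S L] [AddCommGroup P] [Module S P]
variable [AddCommGroup X] [Module S X] [AddCommGroup Y] [Module S Y]
variable [AddCommGroup Z] [Module S Z]
variable [AddCommGroup A] [Module S A] [AddCommGroup B] [Module S B]

theorem map_comp_neg_comm_comp (p : A →ₗ[S] X) (q : B →ₗ[S] Y) (f : P →ₗ[S] B ⊗[S] A) :
    map p q ∘ₗ (-((TensorProduct.comm S B A).toLinearMap ∘ₗ f)) =
      -((TensorProduct.comm S Y X).toLinearMap ∘ₗ map q p ∘ₗ f) := by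
  rw [comp_neg, ← comp_assoc, map_comp_comm_eq, comp_assoc]

theorem eq_neg_comm_comp_iff {f : P →ₗ[S] (A × B) ⊗[S] (A × B)} :
    f = -((TensorProduct.comm S _ _).toLinearMap ∘ₗ f) ↔
      map (fst S A B) (fst S A B) ∘ₗ f =
        -((TensorProduct.comm S A A).toLinearMap ∘ₗ map (fst S A B) (fst S A B) ∘ₗ f) ∧
      map (fst S A B) (snd S A B) ∘ₗ f =
        -((TensorProduct.comm S B A).toLinearMap ∘ₗ map (snd S A B) (fst S A B) ∘ₗ f) ∧
      map (snd S A B) (snd S A B) ∘ₗ f =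
        -((TensorProduct.comm S B B).toLinearMap ∘ₗ map (snd S A B) (snd S A B) ∘ₗ f) := by
  simp only [← map_comp_neg_comm_comp]
  refine ⟨fun hf => by simp only [← hf, and_self], fun ⟨h₁₁, h₁₂, h₂₂⟩ => ?_⟩
  have h₂₁ : map (snd S A B) (fst S A B) ∘ₗ f =
      map (snd S A B) (fst S A B) ∘ₗ (-((TensorProduct.comm S _ _).toLinearMap ∘ₗ f)) := by
    rw [map_comp_neg_comm_comp, h₁₂, map_comp_neg_comm_comp, comp_neg, neg_neg, ← comp_assoc,
      comm_comp_comm, id_comp]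
  exact prod_tensor_prod_hom_ext h₁₁ h₁₂ h₂₁ h₂₂

theorem eq_zero_iff_of_comm_comp_eq_neg {f : P →ₗ[S] (A × B) ⊗[S] (A × B)}
    (hf : (TensorProduct.comm S _ _).toLinearMap ∘ₗ f = -f) :
    f = 0 ↔ map (fst S A B) (fst S A B) ∘ₗ f = 0 ∧ map (snd S A B) (fst S A B) ∘ₗ f = 0 ∧
      map (snd S A B) (snd S A B) ∘ₗ f = 0 := by
  refine ⟨by rintro rfl; simp, fun ⟨h₁₁, h₂₁, h₂₂⟩ => ?_⟩
  have h₁₂ : map (fst S A B) (snd S A B) ∘ₗ f = 0 := by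
    rw [← neg_neg f, ← hf, comp_neg, ← comp_assoc, map_comp_comm_eq, comp_assoc, h₂₁, comp_zero,
      neg_zero]
  apply prod_tensor_prod_hom_ext <;> simp only [h₁₁, h₁₂, h₂₁, h₂₂, comp_zero]

variable {f : P →ₗ[S] L ⊗[S] (L ⊗[S] L)}

theorem map_map_comp_eq_zero_of_swap_right
    (hf : lTensor L (TensorProduct.comm S L L).toLinearMap ∘ₗ f = -f)
    {p : L →ₗ[S] X} {q : L →ₗ[S] Y} {r : L →ₗ[S] Z} (h : map p (map q r) ∘ₗ f = 0) :
    map p (map r q) ∘ₗ f = 0 := by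
  rw [← neg_neg f, ← hf, comp_neg, ← comp_assoc, map_map_comp_lTensor_comm, comp_assoc, h,
    comp_zero, neg_zero]

theorem map_map_comp_eq_zero_of_swap_left
    (hf : (TensorProduct.leftComm S L L L).toLinearMap ∘ₗ f = -f)
    {p : L →ₗ[S] X} {q : L →ₗ[S] Y} {r : L →ₗ[S] Z} (h : map p (map q r) ∘ₗ f = 0) :
    map q (map p r) ∘ₗ f = 0 := by
  rw [← neg_neg f, ← hf, comp_neg, ← comp_assoc, map_map_comp_leftComm, comp_assoc, h,
    comp_zero, neg_zero]

theorem eq_zero_iff_of_lTensor_comm_comp_eq_neg_of_leftComm_comp_eq_neg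
    {f : P →ₗ[S] (A × B) ⊗[S] ((A × B) ⊗[S] (A × B))}
    (hf₂₃ : lTensor (A × B) (TensorProduct.comm S _ _).toLinearMap ∘ₗ f = -f)
    (hf₁₂ : (TensorProduct.leftComm S _ _ _).toLinearMap ∘ₗ f = -f) :
    f = 0 ↔
      map (fst S A B) (map (fst S A B) (fst S A B)) ∘ₗ f = 0 ∧
      map (snd S A B) (map (fst S A B) (fst S A B)) ∘ₗ f = 0 ∧
      map (snd S A B) (map (snd S A B) (fst S A B)) ∘ₗ f = 0 ∧
      map (snd S A B) (map (snd S A B) (snd S A B)) ∘ₗ f = 0 := by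
  refine ⟨by rintro rfl; simp, fun ⟨h₁₁₁, h₂₁₁, h₂₂₁, h₂₂₂⟩ => ?_⟩
  have h₁₂₁ := map_map_comp_eq_zero_of_swap_left hf₁₂ h₂₁₁
  have h₁₁₂ := map_map_comp_eq_zero_of_swap_right hf₂₃ h₁₂₁
  have h₂₁₂ := map_map_comp_eq_zero_of_swap_right hf₂₃ h₂₂₁
  have h₁₂₂ := map_map_comp_eq_zero_of_swap_left hf₁₂ h₂₁₂
  rw [← id_comp f, ← TensorProduct.map_id, ← TensorProduct.map_id]
  simp only [id_prod_eq_inl_comp_fst_add_inr_comp_snd, TensorProduct.map_add_left,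
    TensorProduct.map_add_right, TensorProduct.map_comp, add_comp, comp_assoc, h₁₁₁, h₁₁₂, h₁₂₁,
    h₁₂₂, h₂₁₁, h₂₁₂, h₂₂₁, h₂₂₂, comp_zero, add_zero]

end Antisymmetric

section Cobracket

variable {S L X Y Z : Type*} [CommRing S] [AddCommGroup L] [Module S L]
variable [AddCommGroup X] [Module S X] [AddCommGroup Y] [Module S Y]
variable [AddCommGroup Z] [Module S Z] {Δ : L →ₗ[S] L ⊗[S] L}

/-- The map `(I⊗Δ)Δ - (Δ⊗I)Δ + (I⊗τ)(Δ⊗I)Δ`, whose vanishing is the co-Jacobi identity. -/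
noncomputable def coJacobiator (Δ : L →ₗ[S] L ⊗[S] L) : L →ₗ[S] L ⊗[S] (L ⊗[S] L) :=
  lTensor L Δ ∘ₗ Δ
    - (TensorProduct.assoc S L L L).toLinearMap ∘ₗ rTensor L Δ ∘ₗ Δ
    + lTensor L (TensorProduct.comm S L L).toLinearMap ∘ₗ
        (TensorProduct.assoc S L L L).toLinearMap ∘ₗ rTensor L Δ ∘ₗ Δ

/-- The map `(R⊗R)Δ - (I⊗R + R⊗I + λI)ΔR`, whose vanishing says that `R` is a Rota-Baxter operator
of weight `λ` for the cobracket `Δ`. -/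
noncomputable def rotaBaxterDefect (lam : S) (Δ : L →ₗ[S] L ⊗[S] L) (R : L →ₗ[S] L) :
    L →ₗ[S] L ⊗[S] L :=
  map R R ∘ₗ Δ - (lTensor L R + rTensor L R + lam • LinearMap.id) ∘ₗ Δ ∘ₗ R

theorem lTensor_comm_comp_coJacobiator (hΔ : (TensorProduct.comm S L L).toLinearMap ∘ₗ Δ = -Δ) :
    lTensor L (TensorProduct.comm S L L).toLinearMap ∘ₗ coJacobiator Δ = -coJacobiator Δ := by
  have cancel : lTensor L (TensorProduct.comm S L L).toLinearMap ∘ₗ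
      lTensor L (TensorProduct.comm S L L).toLinearMap = LinearMap.id := by
    rw [← lTensor_comp, comm_comp_comm, lTensor_id]
  simp only [coJacobiator, comp_add, comp_sub, ← comp_assoc, cancel, ← lTensor_comp, hΔ,
    lTensor_neg, id_comp, neg_comp]
  abel

theorem leftComm_comp_coJacobiator (hΔ : (TensorProduct.comm S L L).toLinearMap ∘ₗ Δ = -Δ) :
    (TensorProduct.leftComm S L L L).toLinearMap ∘ₗ coJacobiator Δ = -coJacobiator Δ := by
  have lTensor_term : (TensorProduct.leftComm S L L L).toLinearMap ∘ₗ lTensor L Δ ∘ₗ Δ =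
      -(lTensor L (TensorProduct.comm S L L).toLinearMap ∘ₗ
        (TensorProduct.assoc S L L L).toLinearMap ∘ₗ rTensor L Δ ∘ₗ Δ) := by
    rw [← comp_assoc, leftComm_comp_lTensor]
    simp only [comp_assoc, hΔ, comp_neg]
  have assoc_term : (TensorProduct.leftComm S L L L).toLinearMap ∘ₗ
      (TensorProduct.assoc S L L L).toLinearMap ∘ₗ rTensor L Δ ∘ₗ Δ =
      -((TensorProduct.assoc S L L L).toLinearMap ∘ₗ rTensor L Δ ∘ₗ Δ) := by
    rw [← comp_assoc, leftComm_comp_assoc, comp_assoc, ← comp_assoc Δ, ← rTensor_comp, hΔ,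
      rTensor_neg, neg_comp, comp_neg]
  have comm_assoc_term : (TensorProduct.leftComm S L L L).toLinearMap ∘ₗ
      lTensor L (TensorProduct.comm S L L).toLinearMap ∘ₗ
        (TensorProduct.assoc S L L L).toLinearMap ∘ₗ rTensor L Δ ∘ₗ Δ =
      -(lTensor L Δ ∘ₗ Δ) := by
    have := congrArg (· ∘ₗ Δ)
      (leftComm_comp_lTensor_comm_comp_assoc_comp_rTensor (X' := L) Δ)
    simpa only [comp_assoc, hΔ, comp_neg] using this
  rw [coJacobiator, comp_add, comp_sub, lTensor_term, assoc_term, comm_assoc_term]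
  abel

theorem map_map_comp_coJacobiator (p : L →ₗ[S] X) (q : L →ₗ[S] Y) (r : L →ₗ[S] Z) :
    map p (map q r) ∘ₗ coJacobiator Δ =
      map p (map q r ∘ₗ Δ) ∘ₗ Δ
      - (TensorProduct.assoc S X Y Z).toLinearMap ∘ₗ map (map p q ∘ₗ Δ) r ∘ₗ Δ
      + lTensor X (TensorProduct.comm S Z Y).toLinearMap ∘ₗ
          (TensorProduct.assoc S X Z Y).toLinearMap ∘ₗ map (map p r ∘ₗ Δ) q ∘ₗ Δ := by
  have hqr := congrArg (· ∘ₗ Δ) (map_map_comp_assoc_comp_rTensor Δ p q r)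
  have hrq := congrArg (· ∘ₗ Δ) (map_map_comp_assoc_comp_rTensor Δ p r q)
  simp only [comp_assoc] at hqr hrq
  rw [coJacobiator, comp_add, comp_sub, hqr, ← comp_assoc, map_comp_lTensor,
    ← comp_assoc _ (lTensor L (TensorProduct.comm S L L).toLinearMap), map_map_comp_lTensor_comm,
    comp_assoc _ (map p (map r q)), hrq]

theorem comm_comp_rotaBaxterDefect (hΔ : (TensorProduct.comm S L L).toLinearMap ∘ₗ Δ = -Δ)
    (lam : S) (R : L →ₗ[S] L) :
    (TensorProduct.comm S L L).toLinearMap ∘ₗ rotaBaxterDefect lam Δ R =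
      -rotaBaxterDefect lam Δ R := by
  have hΔ' (x : L) : TensorProduct.comm S L L (Δ x) = -Δ x := LinearMap.congr_fun hΔ x
  ext x
  simp only [rotaBaxterDefect, lTensor, rTensor, coe_comp, LinearEquiv.coe_coe,
    Function.comp_apply, LinearMap.sub_apply, LinearMap.add_apply, LinearMap.smul_apply, id_apply,
    map_sub, ← map_comm, hΔ', map_neg, map_add, map_smul, smul_neg, neg_sub]
  abel

theorem map_comp_rotaBaxterDefect (lam : S) (R : L →ₗ[S] L) (p : L →ₗ[S] X) (q : L →ₗ[S] Y) :
    map p q ∘ₗ rotaBaxterDefect lam Δ R =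
      map (p ∘ₗ R) (q ∘ₗ R) ∘ₗ Δ
      - (map p (q ∘ₗ R) + map (p ∘ₗ R) q + lam • map p q) ∘ₗ Δ ∘ₗ R := by
  simp only [rotaBaxterDefect, comp_sub, ← comp_assoc, comp_add, map_comp_lTensor,
    map_comp_rTensor, comp_smul, comp_id, ← TensorProduct.map_comp]

end Cobracket

theorem CoAnti.comm_comp {Δ : C →ₗ[k] C ⊗[k] C} (hΔ : CoAnti Δ) :
    (TensorProduct.comm k C C).toLinearMap ∘ₗ Δ = -Δ :=
  neg_eq_iff_eq_neg.mp (Eq.symm hΔ)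

theorem coJacobi_iff_coJacobiator_eq_zero {Δ : C →ₗ[k] C ⊗[k] C} :
    CoJacobi Δ ↔ coJacobiator Δ = 0 :=
  Iff.rfl

theorem isRBO_iff_rotaBaxterDefect_eq_zero {lam : k} {Δ : C →ₗ[k] C ⊗[k] C} {R : C →ₗ[k] C} :
    IsRBO lam Δ R ↔ rotaBaxterDefect lam Δ R = 0 :=
  sub_eq_zero.symm

theorem isRBLC_prod_iff {lam : k} {Δ : C × M →ₗ[k] (C × M) ⊗[k] (C × M)}
    {R : C × M →ₗ[k] C × M} :
    IsRBLC lam Δ R ↔ CoAnti Δ ∧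
      (map (fst k C M) (map (fst k C M) (fst k C M)) ∘ₗ coJacobiator Δ = 0 ∧
        map (snd k C M) (map (fst k C M) (fst k C M)) ∘ₗ coJacobiator Δ = 0 ∧
        map (snd k C M) (map (snd k C M) (fst k C M)) ∘ₗ coJacobiator Δ = 0 ∧
        map (snd k C M) (map (snd k C M) (snd k C M)) ∘ₗ coJacobiator Δ = 0) ∧
      map (fst k C M) (fst k C M) ∘ₗ rotaBaxterDefect lam Δ R = 0 ∧
        map (snd k C M) (fst k C M) ∘ₗ rotaBaxterDefect lam Δ R = 0 ∧
        map (snd k C M) (snd k C M) ∘ₗ rotaBaxterDefect lam Δ R = 0 :=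
  and_congr_right fun hΔ => and_congr
    (coJacobi_iff_coJacobiator_eq_zero.trans
      (eq_zero_iff_of_lTensor_comm_comp_eq_neg_of_leftComm_comp_eq_neg
        (lTensor_comm_comp_coJacobiator hΔ.comm_comp) (leftComm_comp_coJacobiator hΔ.comm_comp)))
    (isRBO_iff_rotaBaxterDefect_eq_zero.trans
      (eq_zero_iff_of_comm_comp_eq_neg (comm_comp_rotaBaxterDefect hΔ.comm_comp lam R)))

section ProdCobra

variable {ΔC : C →ₗ[k] C ⊗[k] C} {RC : C →ₗ[k] C} {ΔM : M →ₗ[k] M ⊗[k] M} {RM : M →ₗ[k] M}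
variable {h : M →ₗ[k] C ⊗[k] C} {ρ : M →ₗ[k] M ⊗[k] C} {φ : M →ₗ[k] C} {lam : k}

theorem fst_comp_prodRB : fst k C M ∘ₗ prodRB RC RM φ = RC ∘ₗ fst k C M + φ ∘ₗ snd k C M := by
  ext <;> simp [prodRB]

theorem snd_comp_prodRB : snd k C M ∘ₗ prodRB RC RM φ = RM ∘ₗ snd k C M := by
  ext <;> simp [prodRB]

theorem map_fst_fst_comp_prodCobra :
    map (fst k C M) (fst k C M) ∘ₗ prodCobra ΔC ΔM h ρ =
      ΔC ∘ₗ fst k C M + h ∘ₗ snd k C M := by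
  simp only [prodCobra, comp_sub, comp_add, ← comp_assoc, ← TensorProduct.map_comp, fst_comp_inl,
    fst_comp_inr, TensorProduct.map_zero_left, TensorProduct.map_zero_right, TensorProduct.map_id,
    id_comp, zero_comp, add_zero, sub_zero]

theorem map_snd_fst_comp_prodCobra :
    map (snd k C M) (fst k C M) ∘ₗ prodCobra ΔC ΔM h ρ = ρ ∘ₗ snd k C M := by
  simp only [prodCobra, comp_sub, comp_add, ← comp_assoc, ← TensorProduct.map_comp, fst_comp_inl,
    fst_comp_inr, snd_comp_inl, snd_comp_inr,
    TensorProduct.map_zero_left, TensorProduct.map_zero_right, TensorProduct.map_id,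
    id_comp, zero_comp, add_zero, zero_add, sub_zero]

theorem map_fst_snd_comp_prodCobra :
    map (fst k C M) (snd k C M) ∘ₗ prodCobra ΔC ΔM h ρ =
      -((TensorProduct.comm k M C).toLinearMap ∘ₗ ρ ∘ₗ snd k C M) := by
  simp only [prodCobra, comp_sub, comp_add, ← comp_assoc, ← TensorProduct.map_comp, fst_comp_inl,
    fst_comp_inr, snd_comp_inl, snd_comp_inr,
    TensorProduct.map_zero_left, TensorProduct.map_zero_right, TensorProduct.map_id,
    id_comp, zero_comp, add_zero, zero_sub]

theorem map_snd_snd_comp_prodCobra :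
    map (snd k C M) (snd k C M) ∘ₗ prodCobra ΔC ΔM h ρ = ΔM ∘ₗ snd k C M := by
  simp only [prodCobra, comp_sub, comp_add, ← comp_assoc, ← TensorProduct.map_comp, snd_comp_inl,
    snd_comp_inr, TensorProduct.map_zero_left, TensorProduct.map_zero_right, TensorProduct.map_id,
    id_comp, zero_comp, add_zero, zero_add, sub_zero]

theorem map_fst_fst_comp_prodCobra_comp_prodRB :
    map (fst k C M) (fst k C M) ∘ₗ prodCobra ΔC ΔM h ρ ∘ₗ prodRB RC RM φ =
      ΔC ∘ₗ RC ∘ₗ fst k C M + (ΔC ∘ₗ φ + h ∘ₗ RM) ∘ₗ snd k C M := by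
  rw [← comp_assoc, map_fst_fst_comp_prodCobra, add_comp, comp_assoc, comp_assoc, fst_comp_prodRB,
    snd_comp_prodRB, comp_add, add_comp, add_assoc, comp_assoc, comp_assoc]

theorem map_snd_fst_comp_prodCobra_comp_prodRB :
    map (snd k C M) (fst k C M) ∘ₗ prodCobra ΔC ΔM h ρ ∘ₗ prodRB RC RM φ =
      ρ ∘ₗ RM ∘ₗ snd k C M := by
  rw [← comp_assoc, map_snd_fst_comp_prodCobra, comp_assoc, snd_comp_prodRB]

theorem map_fst_snd_comp_prodCobra_comp_prodRB :
    map (fst k C M) (snd k C M) ∘ₗ prodCobra ΔC ΔM h ρ ∘ₗ prodRB RC RM φ =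
      -((TensorProduct.comm k M C).toLinearMap ∘ₗ ρ ∘ₗ RM ∘ₗ snd k C M) := by
  rw [← comp_assoc, map_fst_snd_comp_prodCobra, neg_comp, comp_assoc, comp_assoc, snd_comp_prodRB]

theorem map_snd_snd_comp_prodCobra_comp_prodRB :
    map (snd k C M) (snd k C M) ∘ₗ prodCobra ΔC ΔM h ρ ∘ₗ prodRB RC RM φ =
      ΔM ∘ₗ RM ∘ₗ snd k C M := by
  rw [← comp_assoc, map_snd_snd_comp_prodCobra, comp_assoc, snd_comp_prodRB]

theorem map_fst_fst_fst_comp_coJacobiator_prodCobra :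
    map (fst k C M) (map (fst k C M) (fst k C M)) ∘ₗ coJacobiator (prodCobra ΔC ΔM h ρ) =
      coJacobiator ΔC ∘ₗ fst k C M +
      (lTensor C ΔC ∘ₗ h
        - (TensorProduct.assoc k C C C).toLinearMap ∘ₗ rTensor C ΔC ∘ₗ h
        + lTensor C (TensorProduct.comm k C C).toLinearMap ∘ₗ
            (TensorProduct.assoc k C C C).toLinearMap ∘ₗ rTensor C ΔC ∘ₗ h
        - ((TensorProduct.assoc k C C C).toLinearMap ∘ₗ map h (LinearMap.id : C →ₗ[k] C) ∘ₗ ρ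
          + lTensor C h ∘ₗ (TensorProduct.comm k M C).toLinearMap ∘ₗ ρ
          - lTensor C (TensorProduct.comm k C C).toLinearMap ∘ₗ
              (TensorProduct.assoc k C C C).toLinearMap ∘ₗ
              map h (LinearMap.id : C →ₗ[k] C) ∘ₗ ρ)) ∘ₗ snd k C M := by
  rw [map_map_comp_coJacobiator, map_fst_fst_comp_prodCobra]
  simp only [coJacobiator, TensorProduct.map_add_left, TensorProduct.map_add_right,
    ← lTensor_comp_map, ← rTensor_comp_map, comp_assoc, add_comp, sub_comp, comp_add, comp_neg,
    map_fst_fst_comp_prodCobra, map_fst_snd_comp_prodCobra, map_snd_fst_comp_prodCobra, rTensor]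
  abel

theorem map_snd_fst_fst_comp_coJacobiator_prodCobra :
    map (snd k C M) (map (fst k C M) (fst k C M)) ∘ₗ coJacobiator (prodCobra ΔC ΔM h ρ) =
      (lTensor M ΔC ∘ₗ ρ + lTensor M h ∘ₗ ΔM
        - ((TensorProduct.assoc k M C C).toLinearMap ∘ₗ rTensor C ρ ∘ₗ ρ
          - lTensor M (TensorProduct.comm k C C).toLinearMap ∘ₗ
              (TensorProduct.assoc k M C C).toLinearMap ∘ₗ rTensor C ρ ∘ₗ ρ)) ∘ₗ snd k C M := by
  rw [map_map_comp_coJacobiator, map_fst_fst_comp_prodCobra, map_snd_fst_comp_prodCobra]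
  simp only [TensorProduct.map_add_right,
    ← lTensor_comp_map, ← rTensor_comp_map, comp_assoc, add_comp, sub_comp,
    map_snd_fst_comp_prodCobra, map_snd_snd_comp_prodCobra]
  abel

theorem map_snd_snd_fst_comp_coJacobiator_prodCobra :
    map (snd k C M) (map (snd k C M) (fst k C M)) ∘ₗ coJacobiator (prodCobra ΔC ΔM h ρ) =
      (lTensor M (TensorProduct.comm k C M).toLinearMap ∘ₗ
            (TensorProduct.assoc k M C M).toLinearMap ∘ₗ rTensor M ρ ∘ₗ ΔM
          + lTensor M ρ ∘ₗ ΔM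
        - (TensorProduct.assoc k M M C).toLinearMap ∘ₗ rTensor C ΔM ∘ₗ ρ) ∘ₗ snd k C M := by
  rw [map_map_comp_coJacobiator, map_snd_fst_comp_prodCobra, map_snd_snd_comp_prodCobra]
  simp only [← lTensor_comp_map, ← rTensor_comp_map, comp_assoc, add_comp, sub_comp,
    map_snd_fst_comp_prodCobra, map_snd_snd_comp_prodCobra]
  abel

theorem map_snd_snd_snd_comp_coJacobiator_prodCobra :
    map (snd k C M) (map (snd k C M) (snd k C M)) ∘ₗ coJacobiator (prodCobra ΔC ΔM h ρ) =
      coJacobiator ΔM ∘ₗ snd k C M := by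
  rw [map_map_comp_coJacobiator, map_snd_snd_comp_prodCobra]
  simp only [coJacobiator, ← lTensor_comp_map, ← rTensor_comp_map, comp_assoc, add_comp, sub_comp,
    map_snd_snd_comp_prodCobra]

theorem map_fst_fst_comp_rotaBaxterDefect_prodCobra :
    map (fst k C M) (fst k C M) ∘ₗ
        rotaBaxterDefect lam (prodCobra ΔC ΔM h ρ) (prodRB RC RM φ) =
      rotaBaxterDefect lam ΔC RC ∘ₗ fst k C M +
      (map φ RC ∘ₗ ρ
        - map RC φ ∘ₗ (TensorProduct.comm k M C).toLinearMap ∘ₗ ρ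
        - map φ (LinearMap.id : C →ₗ[k] C) ∘ₗ ρ ∘ₗ RM
        + lTensor C φ ∘ₗ (TensorProduct.comm k M C).toLinearMap ∘ₗ ρ ∘ₗ RM
        + map φ φ ∘ₗ ΔM
        - (lTensor C RC + rTensor C RC
            + lam • (LinearMap.id : C ⊗[k] C →ₗ[k] C ⊗[k] C)) ∘ₗ ΔC ∘ₗ φ
        - ((rTensor C RC + lTensor C RC
            + lam • (LinearMap.id : C ⊗[k] C →ₗ[k] C ⊗[k] C)) ∘ₗ h ∘ₗ RM
          - map RC RC ∘ₗ h)) ∘ₗ snd k C M := by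
  rw [map_comp_rotaBaxterDefect, fst_comp_prodRB]
  simp only [TensorProduct.map_add_left, TensorProduct.map_add_right, TensorProduct.map_comp]
  simp only [rotaBaxterDefect, ← lTensor_comp_map, ← rTensor_comp_map, comp_assoc, add_comp,
    sub_comp, comp_add, comp_neg, smul_comp, id_comp, smul_add, map_fst_fst_comp_prodCobra,
    map_fst_snd_comp_prodCobra, map_snd_fst_comp_prodCobra, map_snd_snd_comp_prodCobra,
    map_fst_fst_comp_prodCobra_comp_prodRB, map_fst_snd_comp_prodCobra_comp_prodRB,
    map_snd_fst_comp_prodCobra_comp_prodRB]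
  simp only [rTensor]
  abel

theorem map_snd_fst_comp_rotaBaxterDefect_prodCobra :
    map (snd k C M) (fst k C M) ∘ₗ
        rotaBaxterDefect lam (prodCobra ΔC ΔM h ρ) (prodRB RC RM φ) =
      (map RM φ ∘ₗ ΔM + map RM RC ∘ₗ ρ
        - (lTensor M φ ∘ₗ ΔM ∘ₗ RM
          + (lTensor M RC + rTensor C RM
            + lam • (LinearMap.id : M ⊗[k] C →ₗ[k] M ⊗[k] C)) ∘ₗ ρ ∘ₗ RM)) ∘ₗ snd k C M := by
  rw [map_comp_rotaBaxterDefect, fst_comp_prodRB, snd_comp_prodRB]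
  simp only [TensorProduct.map_add_right, TensorProduct.map_comp]
  simp only [← lTensor_comp_map, ← rTensor_comp_map, comp_assoc, add_comp, sub_comp, smul_comp,
    id_comp, map_snd_fst_comp_prodCobra, map_snd_snd_comp_prodCobra,
    map_snd_fst_comp_prodCobra_comp_prodRB, map_snd_snd_comp_prodCobra_comp_prodRB]
  abel

theorem map_snd_snd_comp_rotaBaxterDefect_prodCobra :
    map (snd k C M) (snd k C M) ∘ₗ
        rotaBaxterDefect lam (prodCobra ΔC ΔM h ρ) (prodRB RC RM φ) =
      rotaBaxterDefect lam ΔM RM ∘ₗ snd k C M := by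
  rw [map_comp_rotaBaxterDefect, snd_comp_prodRB]
  simp only [rotaBaxterDefect, TensorProduct.map_comp (f₂ := RM)]
  simp only [← lTensor_comp_map, ← rTensor_comp_map, comp_assoc, add_comp, sub_comp, smul_comp,
    id_comp, map_snd_snd_comp_prodCobra, map_snd_snd_comp_prodCobra_comp_prodRB]

theorem coAnti_prodCobra_iff :
    CoAnti (prodCobra ΔC ΔM h ρ) ↔
      CoAnti ΔC ∧ CoAnti ΔM ∧ (TensorProduct.comm k C C).toLinearMap ∘ₗ h + h = 0 := by
  have fst_fst : ΔC ∘ₗ fst k C M + h ∘ₗ snd k C M =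
      -((TensorProduct.comm k C C).toLinearMap ∘ₗ (ΔC ∘ₗ fst k C M + h ∘ₗ snd k C M)) ↔
      CoAnti ΔC ∧ (TensorProduct.comm k C C).toLinearMap ∘ₗ h + h = 0 := by
    have split : ΔC ∘ₗ fst k C M + h ∘ₗ snd k C M +
        (TensorProduct.comm k C C).toLinearMap ∘ₗ (ΔC ∘ₗ fst k C M + h ∘ₗ snd k C M) =
        (ΔC + (TensorProduct.comm k C C).toLinearMap ∘ₗ ΔC) ∘ₗ fst k C M +
          ((TensorProduct.comm k C C).toLinearMap ∘ₗ h + h) ∘ₗ snd k C M := by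
      simp only [comp_add, add_comp, comp_assoc]
      abel
    rw [CoAnti, ← add_eq_zero_iff_eq_neg, ← add_eq_zero_iff_eq_neg, split,
      comp_fst_add_comp_snd_eq_zero_iff]
  have snd_snd : ΔM ∘ₗ snd k C M =
      -((TensorProduct.comm k M M).toLinearMap ∘ₗ ΔM ∘ₗ snd k C M) ↔ CoAnti ΔM := by
    rw [CoAnti, ← add_eq_zero_iff_eq_neg, ← add_eq_zero_iff_eq_neg, ← comp_assoc, ← add_comp,
      comp_snd_eq_zero_iff]
  rw [CoAnti, eq_neg_comm_comp_iff, map_fst_fst_comp_prodCobra, map_fst_snd_comp_prodCobra,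
    map_snd_fst_comp_prodCobra, map_snd_snd_comp_prodCobra, fst_fst, snd_snd]
  tauto

end ProdCobra

theorem stmt6_general (lam : k) (ΔC : C →ₗ[k] C ⊗[k] C) (RC : C →ₗ[k] C)
    (ΔM : M →ₗ[k] M ⊗[k] M) (RM : M →ₗ[k] M)
    (h : M →ₗ[k] C ⊗[k] C) (ρ : M →ₗ[k] M ⊗[k] C) (φ : M →ₗ[k] C) :
    IsRBLC lam (prodCobra ΔC ΔM h ρ) (prodRB RC RM φ) ↔
      IsRBLC lam ΔC RC ∧ IsRBLC lam ΔM RM ∧ NA2Cocycle lam ΔC RC ΔM RM h ρ φ := by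
  rw [isRBLC_prod_iff, coAnti_prodCobra_iff, map_fst_fst_fst_comp_coJacobiator_prodCobra,
    map_snd_fst_fst_comp_coJacobiator_prodCobra, map_snd_snd_fst_comp_coJacobiator_prodCobra,
    map_snd_snd_snd_comp_coJacobiator_prodCobra, map_fst_fst_comp_rotaBaxterDefect_prodCobra,
    map_snd_fst_comp_rotaBaxterDefect_prodCobra, map_snd_snd_comp_rotaBaxterDefect_prodCobra]
  simp only [comp_fst_add_comp_snd_eq_zero_iff, comp_snd_eq_zero_iff,
    ← isRBO_iff_rotaBaxterDefect_eq_zero, ← coJacobi_iff_coJacobiator_eq_zero]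
  simp only [sub_eq_zero (b := _ + _), sub_eq_zero (b := _ - _), sub_eq_zero (b := _ ∘ₗ _ ∘ₗ _)]
  rw [IsRBLC, IsRBLC, NA2Cocycle]
  tauto

theorem stmt6 (lam : k) (ΔC : C →ₗ[k] C ⊗[k] C) (RC : C →ₗ[k] C)
    (ΔM : M →ₗ[k] M ⊗[k] M) (RM : M →ₗ[k] M)
    (hC : IsRBLC lam ΔC RC) (hM : IsRBLC lam ΔM RM)
    (h : M →ₗ[k] C ⊗[k] C) (ρ : M →ₗ[k] M ⊗[k] C) (φ : M →ₗ[k] C) :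
    IsRBLC lam (prodCobra ΔC ΔM h ρ) (prodRB RC RM φ) ↔
      NA2Cocycle lam ΔC RC ΔM RM h ρ φ := by
  rw [stmt6_general, and_iff_right hC, and_iff_right hM]

end
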